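/- arXiv:1206.1472 — 2 statements merged into one kernel-verified Lean document; each statement's English description precedes it below -/
import Mathlib

section
/- (Central Limit Theorem for open quantum random walks.) Assume (H1): L admits a unique invariant state ρ_∞. Set m = Σ_{i=1}^{2d} Tr(A_i ρ_∞ A_i^*) e_i ∈ ℝ^d with coordinates m_1,…,m_d, and for i = 1,…,d let L_i be a solution of L_i - L^*(L_i) = Σ_{j=1}^{2d} (e_j·e_i) A_j^* A_j - m_i I. Let (ρ_n, X_n)_{n≥0} be the quantum trajectory process of the open quantum random walk. Then (X_n - n m)/√n converges in distribution to the centered Gaussian distribution N(0, C) on ℝ^d, where the covariance matrix C is given for i, j ∈ {1,…,d} by C_{ij} = δ_{ij}( Tr(A_i ρ_∞ A_i^*) + Tr(A_{i+d} ρ_∞ A_{i+d}^*) ) − m_i m_j + ( Tr(A_i ρ_∞ A_i^* L_j) + Tr(A_j ρ_∞ A_j^* L_i) − Tr(A_{i+d} ρ_∞ A_{i+d}^* L_j) − Tr(A_{j+d} ρ_∞ A_{j+d}^* L_i) ) − ( m_i Tr(ρ_∞ L_j) + m_j Tr(ρ_∞ L_i) ), and this matrix C is symmetric positive semidefinite (so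 that N(0,C) is well defined). -/
open MeasureTheory Filter Matrix Finset
open scoped ComplexOrder

noncomputable section

/-- The direction vectors `e_1, …, e_{2d}` in `ℤ^d`, with `e_{d+j} = -e_j`. -/
def dir (d : ℕ) (i : Fin (2 * d)) : Fin d → ℤ :=
  fun j => if (i : ℕ) < d then (if (j : ℕ) = (i : ℕ) then 1 else 0)
           else (if (j : ℕ) = (i : ℕ) - d then -1 else 0)

/-- The direction vectors viewed in `ℝ^d`. -/
def dirR (d : ℕ) (i : Fin (2 * d)) : Fin d → ℝ := fun j => (dir d i j : ℝ)

instance {k : ℕ} : MeasurableSpace (Matrix (Fin k) (Fin k) ℂ) := MeasurableSpace.pi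

/-- A density matrix: positive semidefinite with trace one. -/
def IsDensity {k : ℕ} (ρ : Matrix (Fin k) (Fin k) ℂ) : Prop := ρ.PosSemidef ∧ ρ.trace = 1

/-- The quantum trajectory process of the open quantum random walk. -/
structure IsQTraj {k d : ℕ} {Ω : Type} {mΩ : MeasurableSpace Ω}
    (A : Fin (2 * d) → Matrix (Fin k) (Fin k) ℂ)
    (μ : Measure Ω) (ℱ : Filtration ℕ mΩ)
    (ρ : ℕ → Ω → Matrix (Fin k) (Fin k) ℂ)
    (X : ℕ → Ω → Fin d → ℤ) : Prop where
  density : ∀ n, ∀ᵐ ω ∂μ, IsDensity (ρ n ω)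
  adapted_ρ : ∀ n, Measurable[ℱ n] (ρ n)
  adapted_X : ∀ n, Measurable[ℱ n] (X n)
  prob : ∀ (n : ℕ) (j : Fin (2 * d)),
    μ[(fun ω => if X (n + 1) ω = X n ω + dir d j then (1 : ℝ) else 0) | ℱ n]
      =ᵐ[μ] fun ω => ((A j * ρ n ω * (A j)ᴴ).trace).re
  update : ∀ (n : ℕ) (j : Fin (2 * d)), ∀ᵐ ω ∂μ,
    X (n + 1) ω = X n ω + dir d j →
      ρ (n + 1) ω = ((A j * ρ n ω * (A j)ᴴ).trace)⁻¹ • (A j * ρ n ω * (A j)ᴴ)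

/-- The drift vector `m = Σ_{i=1}^{2d} Tr(A_i ρ_∞ A_i^*) e_i ∈ ℝ^d`. -/
def mvec {k d : ℕ} (A : Fin (2 * d) → Matrix (Fin k) (Fin k) ℂ)
    (ρinf : Matrix (Fin k) (Fin k) ℂ) : Fin d → ℝ :=
  fun j => ∑ i, ((A i * ρinf * (A i)ᴴ).trace).re * dirR d i j

/-- The index `i ∈ {1,…,d}` viewed inside `Fin (2d)` (direction `+e_i`). -/
def lo {d : ℕ} (i : Fin d) : Fin (2 * d) := ⟨i, by have := i.isLt; omega⟩

/-- The index `i + d` viewed inside `Fin (2d)` (direction `-e_i`). -/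
def hi {d : ℕ} (i : Fin d) : Fin (2 * d) := ⟨(i : ℕ) + d, by have := i.isLt; omega⟩

/-- The covariance matrix `C` of the Central Limit Theorem. -/
def Cmat {k d : ℕ} (A : Fin (2 * d) → Matrix (Fin k) (Fin k) ℂ)
    (ρinf : Matrix (Fin k) (Fin k) ℂ) (LL : Fin d → Matrix (Fin k) (Fin k) ℂ)
    (i j : Fin d) : ℝ :=
  (if i = j then ((A (lo i) * ρinf * (A (lo i))ᴴ).trace).re
      + ((A (hi i) * ρinf * (A (hi i))ᴴ).trace).re else 0)
    - mvec A ρinf i * mvec A ρinf j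
    + (((A (lo i) * ρinf * (A (lo i))ᴴ * LL j).trace).re
      + ((A (lo j) * ρinf * (A (lo j))ᴴ * LL i).trace).re
      - ((A (hi i) * ρinf * (A (hi i))ᴴ * LL j).trace).re
      - ((A (hi j) * ρinf * (A (hi j))ᴴ * LL i).trace).re)
    - (mvec A ρinf i * ((ρinf * LL j).trace).re
      + mvec A ρinf j * ((ρinf * LL i).trace).re)

/-!
Let `Kᵤ` be the dual map `M ↦ ∑ⱼ exp(i⟨u, eⱼ - m⟩) Aⱼᴴ M Aⱼ`. The functional
`M ↦ 𝔼[exp(i⟨u, Xₙ - n m⟩) Tr(ρₙ M)]` evolves in `n` by precomposition with `Kᵤ` and its value at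
`1` is the characteristic function of `Xₙ - n m`. For `u = s t` with `s → 0`, uniqueness of the
invariant state makes `M - L*(M) = B` solvable for every `B` with `Tr(ρ_∞ B) = 0`, which yields
matrices `Y`, `Z` such that `1 + isY - s²Z` is an eigenvector of `Kᵤ` for `exp(-s² v / 2)` up to
`o(s²)`, where `Y` is the Hermitian part of `∑ᵢ tᵢ Lᵢ` and `v = ⟨t, C t⟩`. Taking `s = 1 / √n` and
iterating `n` times, the characteristic function tends to `exp(-v / 2)`, and the limit law follows
from Lévy's continuity theorem. The matrix `C` is positive semidefinite because
`v = ∑ⱼ Tr(Dⱼ ρ_∞ Dⱼᴴ)` with `Dⱼ = Y Aⱼ + cⱼ Aⱼ - Aⱼ Y` and `cⱼ = ⟨t, eⱼ - m⟩`.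
-/

open scoped Topology

theorem birkhoffAverage_mem_of_convex {E : Type*} [AddCommGroup E] [Module ℝ E] {T : E → E}
    {K : Set E} (hK : Convex ℝ K) (hTK : Set.MapsTo T K K) {x : E} (hx : x ∈ K) {N : ℕ}
    (hN : N ≠ 0) :
    birkhoffAverage ℝ T id N x ∈ K := by
  have hmem := hK.sum_mem (t := range N) (w := fun _ => (N : ℝ)⁻¹) (z := fun n => T^[n] x)
    (fun _ _ => by positivity) (by simp [hN]) fun n _ => hTK.iterate n hx
  simpa only [birkhoffAverage, birkhoffSum, smul_sum, id] using hmem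

section MeanErgodic

variable {E : Type*} [NormedAddCommGroup E] [NormedSpace ℂ E]

theorem tendsto_birkhoffAverage_of_unique_fixedPoint {T : E →L[ℂ] E} {K : Set E}
    (hKc : IsCompact K) (hK : Convex ℝ K) (hTK : Set.MapsTo T K K) {x₀ : E}
    (huniq : ∀ x ∈ K, T x = x → x = x₀) {x : E} (hx : x ∈ K) :
    Tendsto (birkhoffAverage ℂ T id · x) atTop (𝓝 x₀) := by
  have hmem : ∀ᶠ N in atTop, birkhoffAverage ℂ T id N x ∈ K := by
    filter_upwards [eventually_ne_atTop 0] with N hN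
    rw [birkhoffAverage_congr_ring ℂ ℝ]
    exact birkhoffAverage_mem_of_convex hK hTK hx hN
  refine hKc.tendsto_nhds_of_unique_mapClusterPt hmem fun y hy hcl => huniq y hy ?_
  obtain ⟨φ, hφ, hlim⟩ := MapClusterPt.tendsto_subseq hcl
  have hbdd : Bornology.IsBounded (Set.range fun n => id (T^[n] x)) :=
    hKc.isBounded.subset (Set.range_subset_iff.2 fun n => hTK.iterate n hx)
  have hzero := (tendsto_birkhoffAverage_apply_sub_birkhoffAverage ℂ hbdd).comp hφ.tendsto_atTop
  have hsub : Tendsto (fun N => T (birkhoffAverage ℂ T id (φ N) x) - birkhoffAverage ℂ T id (φ N) x)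
      atTop (𝓝 (T y - y)) := ((T.continuous.tendsto y).comp hlim).sub hlim
  refine sub_eq_zero.1 (tendsto_nhds_unique hsub (hzero.congr fun N => ?_))
  simp only [Function.comp_apply, birkhoffAverage, birkhoffSum, map_smul, map_sum, id,
    ← Function.iterate_succ_apply, Function.iterate_succ_apply']

theorem exists_eq_smul_of_unique_fixedPoint {T : E →L[ℂ] E} {K : Set E}
    (hKc : IsCompact K) (hK : Convex ℝ K) (hTK : Set.MapsTo T K K) {x₀ : E}
    (huniq : ∀ x ∈ K, T x = x → x = x₀) {y : E} (hy : y ∈ Submodule.span ℂ K) (hTy : T y = y) :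
    ∃ c : ℂ, y = c • x₀ := by
  suffices h : ∃ c : ℂ, Tendsto (birkhoffAverage ℂ T id · y) atTop (𝓝 (c • x₀)) by
    obtain ⟨c, hc⟩ := h
    exact ⟨c, tendsto_nhds_unique (Function.IsFixedPt.tendsto_birkhoffAverage ℂ hTy id) hc⟩
  clear hTy
  induction hy using Submodule.span_induction with
  | mem x hx =>
    exact ⟨1, by simpa using tendsto_birkhoffAverage_of_unique_fixedPoint hKc hK hTK huniq hx⟩
  | zero => exact ⟨0, by simp [birkhoffAverage, birkhoffSum, iterate_map_zero]⟩
  | add x y _ _ hx hy =>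
    obtain ⟨⟨a, ha⟩, ⟨b, hb⟩⟩ := hx, hy
    refine ⟨a + b, (add_smul a b x₀ ▸ ha.add hb).congr fun N => ?_⟩
    simp [birkhoffAverage, birkhoffSum, iterate_map_add, sum_add_distrib]
  | smul r x _ hx =>
    obtain ⟨a, ha⟩ := hx
    have hiter (n : ℕ) : T^[n] (r • x) = r • T^[n] x :=
      Function.Commute.iterate_left (g := (r • ·)) (map_smul T r) n x
    refine ⟨r * a, (mul_smul r a x₀ ▸ ha.const_smul r).congr fun N => ?_⟩
    simp only [birkhoffAverage, birkhoffSum, id, hiter, ← smul_sum]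
    exact smul_comm _ _ _

end MeanErgodic

theorem exists_dual_fixed_of_notMem_range {F V : Type*} [Field F] [AddCommGroup V] [Module F V]
    (T : V →ₗ[F] V) {x : V} (hx : x ∉ LinearMap.range (1 - T)) :
    ∃ f : V →ₗ[F] F, f x ≠ 0 ∧ ∀ y, f (T y) = f y := by
  obtain ⟨f, hfx, hf⟩ := Submodule.exists_le_ker_of_notMem hx
  refine ⟨f, hfx, fun y => ?_⟩
  have : f (y - T y) = 0 := hf ⟨y, rfl⟩
  rw [map_sub, sub_eq_zero] at this
  exact this.symm

theorem exists_forall_eq_trace_mul {R n : Type*} [CommSemiring R] [Fintype n]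
    (f : Matrix n n R →ₗ[R] R) : ∃ τ : Matrix n n R, ∀ X, f X = (τ * X).trace := by
  classical
  refine ⟨.of fun i j => f (.single j i 1), fun X => ?_⟩
  calc f X = f (∑ i, ∑ j, X i j • .single i j 1) := by
        simp only [smul_single, smul_eq_mul, mul_one, ← X.matrix_eq_sum_single]
    _ = ∑ i, ∑ j, f (.single j i 1) * X j i := by
        rw [sum_comm]
        simp only [map_sum, map_smul, smul_eq_mul, mul_comm]
    _ = (Matrix.of (fun i j => f (.single j i 1)) * X).trace := by
        simp only [trace, Matrix.diag_apply, mul_apply, of_apply]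

section KrausMaps

variable {n ι : Type*} [Fintype n] [Fintype ι] (A : ι → Matrix n n ℂ)

/-- The completely positive map `L(σ) = ∑ⱼ Aⱼ σ Aⱼᴴ` with Kraus operators `A`. -/
def krausMap : Matrix n n ℂ →ₗ[ℂ] Matrix n n ℂ := ∑ j, LinearMap.mulLeftRight ℂ (A j, (A j)ᴴ)

/-- The weighted adjoint `X ↦ ∑ⱼ wⱼ Aⱼᴴ X Aⱼ` of `krausMap A`, linear in the weight `w`: weight `1`
gives `L*`, and exponential weights give the operators whose powers compute the characteristic
function of the walk. -/
def weightedDual : (ι → ℂ) →ₗ[ℂ] Matrix n n ℂ →ₗ[ℂ] Matrix n n ℂ :=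
  Fintype.linearCombination ℂ fun j => LinearMap.mulLeftRight ℂ ((A j)ᴴ, A j)

theorem krausMap_apply (σ : Matrix n n ℂ) : krausMap A σ = ∑ j, A j * σ * (A j)ᴴ := by
  simp [krausMap]

theorem weightedDual_apply (w : ι → ℂ) (X : Matrix n n ℂ) :
    weightedDual A w X = ∑ j, w j • ((A j)ᴴ * X * A j) := by
  simp [weightedDual, Fintype.linearCombination_apply]

theorem trace_mul_weightedDual (w : ι → ℂ) (σ X : Matrix n n ℂ) :
    (σ * weightedDual A w X).trace = ∑ j, w j * (A j * σ * (A j)ᴴ * X).trace := by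
  simp only [weightedDual_apply, mul_sum, trace_sum, Matrix.mul_smul, trace_smul,
    smul_eq_mul]
  refine sum_congr rfl fun j _ => ?_
  rw [Matrix.mul_assoc (A j * σ), Matrix.mul_assoc (A j), trace_mul_comm (A j)]
  simp only [Matrix.mul_assoc]

theorem trace_krausMap_mul (σ X : Matrix n n ℂ) :
    (krausMap A σ * X).trace = (σ * weightedDual A 1 X).trace := by
  simp [trace_mul_weightedDual, krausMap_apply, sum_mul, trace_sum]

theorem weightedDual_conjTranspose (w : ι → ℂ) (X : Matrix n n ℂ) :
    (weightedDual A w X)ᴴ = weightedDual A (star w) Xᴴ := by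
  simp [weightedDual_apply, conjTranspose_sum, Matrix.mul_assoc]

variable {A}

theorem posSemidef_krausMap {σ : Matrix n n ℂ} (hσ : σ.PosSemidef) :
    (krausMap A σ).PosSemidef := by
  rw [krausMap_apply]
  exact posSemidef_sum _ fun j _ => hσ.mul_mul_conjTranspose_same _

variable [DecidableEq n]

theorem weightedDual_one_one (hA : ∑ j, (A j)ᴴ * A j = 1) : weightedDual A 1 1 = 1 := by
  simp [weightedDual_apply, hA]

theorem trace_krausMap (hA : ∑ j, (A j)ᴴ * A j = 1) (σ : Matrix n n ℂ) :
    (krausMap A σ).trace = σ.trace := by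
  simpa only [weightedDual_one_one hA, mul_one] using trace_krausMap_mul A σ 1

end KrausMaps

section Density

open scoped Matrix.Norms.Frobenius

theorem exists_eq_conjTranspose_mul_self {n : Type*} [Fintype n] {σ : Matrix n n ℂ}
    (hσ : σ.PosSemidef) : ∃ B : Matrix n n ℂ, σ = Bᴴ * B := by
  classical
  open scoped MatrixOrder Matrix.Norms.L2Operator in
  exact CStarAlgebra.nonneg_iff_eq_star_mul_self.1 hσ.nonneg

theorem span_posSemidef_eq_top {n : Type*} [Finite n] :
    Submodule.span ℂ {σ : Matrix n n ℂ | σ.PosSemidef} = ⊤ := by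
  classical
  have := Fintype.ofFinite n
  open scoped MatrixOrder Matrix.Norms.L2Operator in
  simpa only [nonneg_iff_posSemidef] using CStarAlgebra.span_nonneg (A := Matrix n n ℂ)

theorem ofReal_sq_frobenius_norm {m n : Type*} [Fintype m] [Fintype n] (B : Matrix m n ℂ) :
    ((‖B‖ ^ 2 : ℝ) : ℂ) = (Bᴴ * B).trace := by
  have hnonneg : 0 ≤ ∑ i, ∑ j, ‖B i j‖ ^ (2 : ℝ) := by positivity
  rw [frobenius_norm_def, ← Real.sqrt_eq_rpow, Real.sq_sqrt hnonneg, sum_comm]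
  simp [trace, mul_apply, Complex.conj_mul']

variable {k : ℕ} {σ : Matrix (Fin k) (Fin k) ℂ}

theorem isDensity_inv_trace_smul (hσ : σ.PosSemidef) (htr : σ.trace ≠ 0) :
    IsDensity (σ.trace⁻¹ • σ) :=
  ⟨hσ.smul (inv_nonneg.2 hσ.trace_nonneg), by simp [trace_smul, htr]⟩

namespace IsDensity

theorem norm_le_one (hσ : IsDensity σ) : ‖σ‖ ≤ 1 := by
  obtain ⟨B, rfl⟩ := exists_eq_conjTranspose_mul_self hσ.1
  have hB : ‖B‖ ^ 2 = 1 := by exact_mod_cast (ofReal_sq_frobenius_norm B).trans hσ.2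
  calc ‖Bᴴ * B‖ ≤ ‖Bᴴ‖ * ‖B‖ := frobenius_norm_mul _ _
    _ = 1 := by rw [frobenius_norm_conjTranspose, ← sq, hB]

theorem krausMap {ι : Type*} [Fintype ι] {A : ι → Matrix (Fin k) (Fin k) ℂ}
    (hA : ∑ j, (A j)ᴴ * A j = 1) (hσ : IsDensity σ) : IsDensity (krausMap A σ) :=
  ⟨posSemidef_krausMap hσ.1, (trace_krausMap hA σ).trans hσ.2⟩

end IsDensity

theorem norm_trace_mul_le {n : Type*} [Fintype n] (σ X : Matrix n n ℂ) :
    ‖(σ * X).trace‖ ≤ ‖σ‖ * ‖X‖ := by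
  have hnorm (B : Matrix n n ℂ) : ‖B‖ = √(∑ p : n × n, ‖B p.1 p.2‖ ^ 2) := by
    simp [frobenius_norm_def, Real.sqrt_eq_rpow, Fintype.sum_prod_type]
  calc ‖(σ * X).trace‖ ≤ ∑ p : n × n, ‖σ p.1 p.2‖ * ‖Xᵀ p.1 p.2‖ := by
        simpa [trace, mul_apply, Fintype.sum_prod_type] using
          norm_sum_le univ fun p : n × n => σ p.1 p.2 * X p.2 p.1
    _ ≤ ‖σ‖ * ‖Xᵀ‖ := by
        simpa only [hnorm] using Real.sum_mul_le_sqrt_mul_sqrt univ _ _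
    _ = ‖σ‖ * ‖X‖ := by rw [frobenius_norm_transpose]

theorem convex_setOf_isDensity : Convex ℝ {σ : Matrix (Fin k) (Fin k) ℂ | IsDensity σ} := by
  rintro σ hσ τ hτ a b ha hb hab
  refine ⟨(hσ.1.smul ha).add (hτ.1.smul hb), ?_⟩
  simp [trace_add, trace_smul, hσ.2, hτ.2, ← Complex.ofReal_add, hab]

theorem isCompact_setOf_isDensity :
    IsCompact {σ : Matrix (Fin k) (Fin k) ℂ | IsDensity σ} := by
  refine Metric.isCompact_of_isClosed_isBounded ?_
    ((Metric.isBounded_closedBall (x := 0) (r := 1)).subset fun σ hσ => ?_)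
  · simp only [IsDensity, posSemidef_iff_dotProduct_mulVec, IsHermitian, Set.ofPred_and,
      Set.ofPred_forall]
    refine .inter (.inter (isClosed_eq ?_ ?_) (isClosed_iInter fun x => isClosed_le ?_ ?_))
      (isClosed_eq ?_ ?_) <;> fun_prop
  · simpa using IsDensity.norm_le_one hσ

theorem span_setOf_isDensity :
    Submodule.span ℂ {σ : Matrix (Fin k) (Fin k) ℂ | IsDensity σ} = ⊤ := by
  refine top_le_iff.1 (span_posSemidef_eq_top.ge.trans (Submodule.span_le.2 fun σ hσ => ?_))
  by_cases htr : σ.trace = 0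
  · simp [(PosSemidef.trace_eq_zero_iff hσ).1 htr]
  · have hmem : σ.trace⁻¹ • σ ∈ Submodule.span ℂ {σ : Matrix (Fin k) (Fin k) ℂ | IsDensity σ} :=
      Submodule.subset_span (isDensity_inv_trace_smul hσ htr)
    simpa [smul_smul, htr] using Submodule.smul_mem _ σ.trace hmem

variable {ι : Type*} [Fintype ι] {A : ι → Matrix (Fin k) (Fin k) ℂ}
  {ρinf : Matrix (Fin k) (Fin k) ℂ}

theorem exists_eq_smul_of_krausMap_eq (hA : ∑ j, (A j)ᴴ * A j = 1)
    (huniq : ∀ σ, IsDensity σ → krausMap A σ = σ → σ = ρinf) (hσ : krausMap A σ = σ) :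
    ∃ c : ℂ, σ = c • ρinf :=
  exists_eq_smul_of_unique_fixedPoint (T := (krausMap A).toContinuousLinearMap)
    isCompact_setOf_isDensity convex_setOf_isDensity (fun _ => IsDensity.krausMap hA)
    huniq (span_setOf_isDensity ▸ Submodule.mem_top) hσ

theorem exists_sub_weightedDual_one_eq (hA : ∑ j, (A j)ᴴ * A j = 1)
    (huniq : ∀ σ, IsDensity σ → krausMap A σ = σ → σ = ρinf)
    {R : Matrix (Fin k) (Fin k) ℂ} (hR : (ρinf * R).trace = 0) :
    ∃ Z, Z - weightedDual A 1 Z = R := by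
  by_contra hne
  obtain ⟨f, hfR, hf⟩ := exists_dual_fixed_of_notMem_range (weightedDual A 1) (x := R) hne
  obtain ⟨τ, hτ⟩ := exists_forall_eq_trace_mul f
  have hfix : krausMap A τ = τ := by
    refine ext_iff_trace_mul_right.2 fun X => ?_
    rw [trace_krausMap_mul, ← hτ, ← hτ, hf]
  obtain ⟨c, rfl⟩ := exists_eq_smul_of_krausMap_eq hA huniq hfix
  simp [hτ, hR] at hfR

end Density

section PoissonEquation

open scoped ComplexStarModule

variable {n ι : Type*} [Fintype n] [Fintype ι]

/-- The Poisson equation `L - L*(L) = ∑ⱼ cⱼ Aⱼᴴ Aⱼ` attached to real jump sizes `c`. -/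
def IsPoissonSolution [DecidableEq n] (A : ι → Matrix n n ℂ) (c : ι → ℝ) (L : Matrix n n ℂ) :
    Prop :=
  L - weightedDual A 1 L = weightedDual A (fun j => (c j : ℂ)) 1

/-- The variance per unit time in the state `ρ` of a walk with jump sizes `c` and corrector `L`;
only the Hermitian part of `L` matters, whence the real parts. -/
def asymptoticVariance (A : ι → Matrix n n ℂ) (ρ : Matrix n n ℂ) (c : ι → ℝ)
    (L : Matrix n n ℂ) : ℝ :=
  ∑ j, (c j ^ 2 * (A j * ρ * (A j)ᴴ).trace.re + 2 * (c j * (A j * ρ * (A j)ᴴ * L).trace.re))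

theorem ofReal_re_trace_mul {P Q : Matrix n n ℂ} (hP : P.IsHermitian) (hQ : Q.IsHermitian) :
    (((P * Q).trace.re : ℝ) : ℂ) = (P * Q).trace := by
  rw [← Complex.conj_eq_iff_re, starRingEnd_apply, ← trace_conjTranspose, conjTranspose_mul,
    hP.eq, hQ.eq, trace_mul_comm]

theorem re_trace_mul_realPart {P : Matrix n n ℂ} (hP : P.IsHermitian) (L : Matrix n n ℂ) :
    (P * (ℜ L : Matrix n n ℂ)).trace.re = (P * L).trace.re := by
  have hstar : (P * star L).trace = star (P * L).trace := by
    rw [← trace_conjTranspose, conjTranspose_mul, hP.eq, trace_mul_comm, star_eq_conjTranspose]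
  rw [realPart_apply_coe, Matrix.mul_smul, trace_smul, Matrix.mul_add, trace_add, hstar,
    Complex.smul_re, Complex.add_re, Complex.star_def, Complex.conj_re, smul_eq_mul]
  ring

theorem asymptoticVariance_realPart (A : ι → Matrix n n ℂ) {ρ : Matrix n n ℂ}
    (hρ : ρ.PosSemidef) (c : ι → ℝ) (L : Matrix n n ℂ) :
    asymptoticVariance A ρ c (ℜ L) = asymptoticVariance A ρ c L := by
  simp only [asymptoticVariance,
    re_trace_mul_realPart (hρ.mul_mul_conjTranspose_same _).isHermitian]

theorem ofReal_asymptoticVariance [DecidableEq n] (A : ι → Matrix n n ℂ) {ρ Y : Matrix n n ℂ}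
    (hρ : ρ.PosSemidef) (c : ι → ℝ) (hY : Y.IsHermitian) :
    (asymptoticVariance A ρ c Y : ℂ) =
      (ρ * (weightedDual A (fun j => (c j : ℂ) ^ 2) 1
        + (2 : ℂ) • weightedDual A (fun j => (c j : ℂ)) Y)).trace := by
  have hherm j := (hρ.mul_mul_conjTranspose_same (A j)).isHermitian
  have hre j : ((A j * ρ * (A j)ᴴ).trace.re : ℂ) = (A j * ρ * (A j)ᴴ).trace := by
    simpa using ofReal_re_trace_mul (hherm j) isHermitian_one
  simp only [Matrix.mul_add, Matrix.mul_smul, trace_add, trace_smul, trace_mul_weightedDual,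
    Matrix.mul_one, smul_eq_mul, mul_sum, ← sum_add_distrib, asymptoticVariance, Complex.ofReal_sum,
    Complex.ofReal_add, Complex.ofReal_mul, Complex.ofReal_pow, hre,
    ofReal_re_trace_mul (hherm _) hY, Complex.ofReal_ofNat]

namespace IsPoissonSolution

variable [DecidableEq n] {A : ι → Matrix n n ℂ} {c : ι → ℝ} {L Y ρ : Matrix n n ℂ}

theorem of_sub_eq {b : ι → ℝ} {a : ℝ} (hA : ∑ j, (A j)ᴴ * A j = 1)
    (hL : L - ∑ j, (A j)ᴴ * L * A j = ∑ j, b j • ((A j)ᴴ * A j) - a • 1) :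
    IsPoissonSolution A (fun j => b j - a) L := by
  simp only [IsPoissonSolution, weightedDual_apply, Pi.one_apply, one_smul, Matrix.mul_one, hL,
    Complex.coe_smul, sub_smul, sum_sub_distrib, ← smul_sum, hA]

theorem sum_smul {κ : Type*} [Fintype κ] {b : κ → ι → ℝ} {L : κ → Matrix n n ℂ}
    (hL : ∀ i, IsPoissonSolution A (b i) (L i)) (t : κ → ℝ) :
    IsPoissonSolution A (fun j => ∑ i, t i * b i j) (∑ i, t i • L i) := by
  have hw : (fun j => ((∑ i, t i * b i j : ℝ) : ℂ)) = ∑ i, (t i : ℂ) • fun j => (b i j : ℂ) := by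
    ext j
    simp
  simp only [IsPoissonSolution, hw, map_sum, LinearMap.sum_apply, LinearMap.smul_apply,
    fun i => (hL i).symm, smul_sub, sum_sub_distrib, Complex.coe_smul, LinearMap.map_smul_of_tower]

theorem realPart (hL : IsPoissonSolution A c L) : IsPoissonSolution A c (ℜ L) := by
  have hstar : star L - weightedDual A 1 (star L) = weightedDual A (fun j => (c j : ℂ)) 1 := by
    simpa [weightedDual_conjTranspose, Pi.star_def, star_eq_conjTranspose] using
      congrArg conjTranspose hL
  rw [IsPoissonSolution, realPart_apply_coe, LinearMap.map_smul_of_tower, map_add, ← smul_sub,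
    add_sub_add_comm, hL, hstar, ← two_smul ℝ, smul_smul, inv_mul_cancel₀ two_ne_zero, one_smul]

theorem sum_conjTranspose_mul_self_eq (hA : ∑ j, (A j)ᴴ * A j = 1) (hY : Y.IsHermitian)
    (hPoisson : IsPoissonSolution A c Y) :
    ∑ j, (Y * A j + c j • A j - A j * Y)ᴴ * (Y * A j + c j • A j - A j * Y) =
      weightedDual A 1 (Y * Y) - Y * Y + (weightedDual A (fun j => (c j : ℂ) ^ 2) 1
        + (2 : ℂ) • weightedDual A (fun j => (c j : ℂ)) Y) := by
  have hsplit : Y = weightedDual A 1 Y + weightedDual A (fun j => (c j : ℂ)) 1 := by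
    rw [← hPoisson, add_sub_cancel]
  have hexpand : ∑ j, (Y * A j + c j • A j - A j * Y)ᴴ * (Y * A j + c j • A j - A j * Y) =
      weightedDual A 1 (Y * Y) + weightedDual A (fun j => (c j : ℂ) ^ 2) 1
        + (2 : ℂ) • weightedDual A (fun j => (c j : ℂ)) Y
        - (weightedDual A 1 Y + weightedDual A (fun j => (c j : ℂ)) 1) * Y
        - Y * (weightedDual A 1 Y + weightedDual A (fun j => (c j : ℂ)) 1)
        + Y * weightedDual A 1 1 * Y := by
    simp only [weightedDual_apply, sum_mul, mul_sum, smul_sum, ← sum_add_distrib,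
      ← sum_sub_distrib]
    refine sum_congr rfl fun j _ => ?_
    simp only [conjTranspose_sub, conjTranspose_add, conjTranspose_mul, conjTranspose_smul, hY.eq,
      Complex.star_def, Complex.conj_ofReal, ← Complex.coe_smul, Pi.one_apply, Matrix.mul_add,
      Matrix.add_mul, Matrix.mul_sub, Matrix.sub_mul, Matrix.mul_smul, Matrix.smul_mul,
      Matrix.mul_one, Matrix.mul_assoc]
    module
  rw [hexpand, ← hsplit, weightedDual_one_one hA, Matrix.mul_one]
  abel

theorem ofReal_asymptoticVariance_eq_sum_trace (hA : ∑ j, (A j)ᴴ * A j = 1) (hρ : ρ.PosSemidef)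
    (hinv : krausMap A ρ = ρ) (hY : Y.IsHermitian) (hPoisson : IsPoissonSolution A c Y) :
    (asymptoticVariance A ρ c Y : ℂ) =
      ∑ j, ((Y * A j + c j • A j - A j * Y) * ρ * (Y * A j + c j • A j - A j * Y)ᴴ).trace := by
  have hcancel : (ρ * weightedDual A 1 (Y * Y)).trace = (ρ * (Y * Y)).trace := by
    rw [← trace_krausMap_mul, hinv]
  calc (asymptoticVariance A ρ c Y : ℂ)
      = (ρ * ∑ j, (Y * A j + c j • A j - A j * Y)ᴴ * (Y * A j + c j • A j - A j * Y)).trace := by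
        rw [ofReal_asymptoticVariance A hρ c hY, sum_conjTranspose_mul_self_eq hA hY hPoisson,
          Matrix.mul_add ρ (_ - _), Matrix.mul_sub, trace_add (_ - _), trace_sub, hcancel,
          sub_self, zero_add]
    _ = _ := by
        rw [mul_sum, trace_sum]
        refine sum_congr rfl fun j _ => ?_
        rw [trace_mul_comm, Matrix.mul_assoc, trace_mul_comm (_)ᴴ]

theorem asymptoticVariance_nonneg (hA : ∑ j, (A j)ᴴ * A j = 1) (hρ : ρ.PosSemidef)
    (hinv : krausMap A ρ = ρ) (hL : IsPoissonSolution A c L) :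
    0 ≤ asymptoticVariance A ρ c L := by
  rw [← asymptoticVariance_realPart A hρ, ← Complex.zero_le_real,
    ofReal_asymptoticVariance_eq_sum_trace hA hρ hinv (ℜ L).2 hL.realPart]
  exact sum_nonneg fun j _ => (hρ.mul_mul_conjTranspose_same _).trace_nonneg

end IsPoissonSolution

end PoissonEquation

theorem exists_second_corrector {k : ℕ} {ι : Type*} [Fintype ι]
    {A : ι → Matrix (Fin k) (Fin k) ℂ} {ρinf Y : Matrix (Fin k) (Fin k) ℂ} (c : ι → ℝ)
    (hA : ∑ j, (A j)ᴴ * A j = 1) (hρinf : IsDensity ρinf)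
    (huniq : ∀ σ, IsDensity σ → krausMap A σ = σ → σ = ρinf) (hY : Y.IsHermitian) :
    ∃ Z, Z - weightedDual A 1 Z = (1 / 2 : ℂ) • weightedDual A (fun j => (c j : ℂ) ^ 2) 1
      + weightedDual A (fun j => (c j : ℂ)) Y
      - (asymptoticVariance A ρinf c Y / 2 : ℂ) • (1 : Matrix (Fin k) (Fin k) ℂ) := by
  refine exists_sub_weightedDual_one_eq hA huniq ?_
  simp only [ofReal_asymptoticVariance A hρinf.1 c hY, Matrix.mul_add, Matrix.mul_sub, trace_add,
    trace_sub, Matrix.mul_smul, trace_smul, Matrix.mul_one, hρinf.2, smul_eq_mul]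
  ring

section SpectralPerturbation

open Asymptotics

theorem exp_smul_sub_isLittleO {ι : Type*} [Fintype ι] (c : ι → ℂ) :
    (fun z : ℂ => (fun j => Complex.exp (z * c j)) - (1 + z • c + (z ^ 2 / 2) • c ^ 2))
      =o[𝓝 0] fun z => z ^ 2 := by
  refine isLittleO_pi.2 fun j => ?_
  have hlin : Tendsto (fun z : ℂ => z * c j) (𝓝 0) (𝓝 0) :=
    Continuous.tendsto' (by fun_prop) _ _ (zero_mul _)
  have hbigO : (fun z : ℂ => (z * c j) ^ 2) =O[𝓝 0] fun z => z ^ 2 :=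
    (isBigO_const_mul_self (c j ^ 2) _ _).congr_left fun z => by ring
  refine (((Complex.exp_sub_sum_range_succ_isLittleO_pow 2).comp_tendsto hlin).trans_isBigO
    hbigO).congr_left fun z => ?_
  simp only [Function.comp_apply, sum_range_succ, sum_range_zero, Pi.sub_apply, Pi.add_apply,
    Pi.one_apply, Pi.smul_apply, Pi.pow_apply, smul_eq_mul, Nat.factorial]
  push_cast
  ring

theorem exp_sq_mul_sub_isLittleO (a : ℂ) :
    (fun z : ℂ => Complex.exp (z ^ 2 * a) - (1 + z ^ 2 * a)) =o[𝓝 0] fun z => z ^ 2 := by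
  have hquad : Tendsto (fun z : ℂ => z ^ 2 * a) (𝓝 0) (𝓝 0) :=
    Continuous.tendsto' (by fun_prop) _ _ (by simp)
  have hbigO : (fun z : ℂ => (z ^ 2 * a) ^ 1) =O[𝓝 0] fun z => z ^ 2 :=
    (isBigO_const_mul_self a _ _).congr_left fun z => by ring
  refine (((Complex.exp_sub_sum_range_succ_isLittleO_pow 1).comp_tendsto hquad).trans_isBigO
    hbigO).congr_left fun z => ?_
  simp [sum_range_succ]

theorem second_order_perturbation_eq {V E : Type*} [AddCommGroup V] [Module ℂ V]
    [AddCommGroup E] [Module ℂ E] (K : V →ₗ[ℂ] E →ₗ[ℂ] E) {w₀ w₁ w₂ : V} {v : ℂ} {e Y Z : E}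
    (he : K w₀ e = e) (hY : Y - K w₀ Y = K w₁ e)
    (hZ : Z - K w₀ Z = (1 / 2 : ℂ) • K w₂ e + K w₁ Y - (v / 2) • e) (z : ℂ) :
    K (w₀ + z • w₁ + (z ^ 2 / 2) • w₂) (e + z • Y + z ^ 2 • Z)
        - (1 + z ^ 2 * (v / 2)) • (e + z • Y + z ^ 2 • Z) =
      z ^ 3 • (K w₁ Z + (1 / 2 : ℂ) • K w₂ Y - (v / 2) • Y)
        + z ^ 4 • ((1 / 2 : ℂ) • K w₂ Z - (v / 2) • Z) := by
  have hY' : K w₀ Y = Y - K w₁ e := by rw [← hY, sub_sub_cancel]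
  have hZ' : K w₀ Z = Z - ((1 / 2 : ℂ) • K w₂ e + K w₁ Y - (v / 2) • e) := by
    rw [← hZ, sub_sub_cancel]
  simp only [map_add, map_smul, LinearMap.add_apply, LinearMap.smul_apply, he, hY', hZ']
  module

variable {E : Type*} [NormedAddCommGroup E] [NormedSpace ℂ E]

theorem perturbed_eigenvector_isLittleO {ι : Type*} [Finite ι]
    (K : (ι → ℂ) →L[ℂ] E →L[ℂ] E) {c : ι → ℂ} {v : ℂ} {e Y Z : E} (he : K 1 e = e)
    (hY : Y - K 1 Y = K c e)
    (hZ : Z - K 1 Z = (1 / 2 : ℂ) • K (c ^ 2) e + K c Y - (v / 2) • e) :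
    (fun z : ℂ => K (fun j => Complex.exp (z * c j)) (e + z • Y + z ^ 2 • Z)
      - Complex.exp (z ^ 2 * (v / 2)) • (e + z • Y + z ^ 2 • Z)) =o[𝓝 0] fun z => z ^ 2 := by
  have := Fintype.ofFinite ι
  set W : ℂ → E := fun z => e + z • Y + z ^ 2 • Z
  set w : ℂ → ι → ℂ := fun z => 1 + z • c + (z ^ 2 / 2) • c ^ 2
  have hWbdd : W =O[𝓝 0] fun _ => (1 : ℂ) :=
    (show Continuous W by fun_prop).continuousAt.isBigO_one ℂ
  have hK : (fun z => K ((fun j => Complex.exp (z * c j)) - w z) (W z)) =o[𝓝 0]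
      fun z => z ^ 2 := by
    have hKop : (fun z => K ((fun j => Complex.exp (z * c j)) - w z)) =o[𝓝 0] fun z : ℂ => z ^ 2 :=
      (K.isBigO_comp _ _).trans_isLittleO (exp_smul_sub_isLittleO c)
    simpa using (IsBigO.of_bound 1 (.of_forall fun z => by
      simpa using (K ((fun j => Complex.exp (z * c j)) - w z)).le_opNorm (W z))).trans_isLittleO
        (hKop.norm_left.mul_isBigO hWbdd.norm_left)
  have hexp : (fun z => (Complex.exp (z ^ 2 * (v / 2)) - (1 + z ^ 2 * (v / 2))) • W z) =o[𝓝 0]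
      fun z => z ^ 2 := by
    simpa using (exp_sq_mul_sub_isLittleO (v / 2)).smul_isBigO hWbdd
  have hpow (T : E) {m : ℕ} (hm : 2 < m) : (fun z : ℂ => z ^ m • T) =o[𝓝 0] fun z => z ^ 2 := by
    simpa using (isLittleO_pow_pow (𝕜 := ℂ) hm).smul_isBigO
      (isBigO_const_const T (one_ne_zero (α := ℂ)) _)
  have hmain : (fun z => K (w z) (W z) - (1 + z ^ 2 * (v / 2)) • W z) =o[𝓝 0] fun z => z ^ 2 :=
    ((hpow _ (show 2 < 3 by lia)).add (hpow _ (show 2 < 4 by lia))).congr_left fun z =>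
      (second_order_perturbation_eq K.toLinearMap₁₂ he hY hZ z).symm
  refine ((hK.sub hexp).add hmain).congr_left fun z => ?_
  rw [map_sub, _root_.sub_apply, sub_smul]
  abel

theorem norm_sub_pow_mul_le {E : Type*} [SeminormedAddCommGroup E] [Module ℂ E]
    {ℓ : ℕ → E →ₗ[ℂ] ℂ} {Φ : E → E} {q : ℂ} (hℓ : ∀ n x, ‖ℓ n x‖ ≤ ‖x‖)
    (hstep : ∀ n x, ℓ (n + 1) x = ℓ n (Φ x)) (hq : ‖q‖ ≤ 1) (x : E) (n : ℕ) :
    ‖ℓ n x - q ^ n * ℓ 0 x‖ ≤ n * ‖Φ x - q • x‖ := by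
  induction n with
  | zero => simp
  | succ n ih =>
    have hsplit : ℓ (n + 1) x - q ^ (n + 1) * ℓ 0 x =
        ℓ n (Φ x - q • x) + q * (ℓ n x - q ^ n * ℓ 0 x) := by
      rw [hstep, map_sub, map_smul, smul_eq_mul]
      ring
    calc ‖ℓ (n + 1) x - q ^ (n + 1) * ℓ 0 x‖
        ≤ ‖ℓ n (Φ x - q • x)‖ + ‖q‖ * ‖ℓ n x - q ^ n * ℓ 0 x‖ := by
          rw [hsplit, ← norm_mul]
          exact norm_add_le _ _
      _ ≤ ‖Φ x - q • x‖ + 1 * (n * ‖Φ x - q • x‖) := by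
          gcongr
          exact hℓ _ _
      _ = (n + 1 : ℕ) * ‖Φ x - q • x‖ := by
          push_cast
          ring

theorem tendsto_apply_of_approx_eigenvector {ℓ : ℝ → ℕ → E →ₗ[ℂ] ℂ} {Φ : ℝ → E → E} {W : ℝ → E}
    {e : E} {v : ℝ} (hv : 0 ≤ v) (hℓ : ∀ s n x, ‖ℓ s n x‖ ≤ ‖x‖)
    (hstep : ∀ s n x, ℓ s (n + 1) x = ℓ s n (Φ s x))
    (hinit : Tendsto (fun s => ℓ s 0 e) (𝓝 0) (𝓝 1)) (hW : Tendsto W (𝓝 0) (𝓝 e))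
    (happrox : (fun s => Φ s (W s) - Complex.exp (-(s ^ 2 * (v / 2)) : ℝ) • W s)
      =o[𝓝 0] fun s => s ^ 2) :
    Tendsto (fun n : ℕ => ℓ (√n)⁻¹ n e) atTop (𝓝 (Complex.exp (-(v / 2) : ℝ))) := by
  set s : ℕ → ℝ := fun n => (√n)⁻¹
  set q : ℝ → ℂ := fun s => Complex.exp (-(s ^ 2 * (v / 2)) : ℝ)
  have hs : Tendsto s atTop (𝓝 0) :=
    tendsto_inv_atTop_zero.comp (Real.tendsto_sqrt_atTop.comp tendsto_natCast_atTop_atTop)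
  have hs_sq (n : ℕ) : (s n ^ 2)⁻¹ = n := by simp [s]
  have hq_norm (s : ℝ) : ‖q s‖ ≤ 1 := by
    rw [Complex.norm_exp_ofReal, Real.exp_le_one_iff]
    nlinarith [sq_nonneg s]
  have hq_pow {n : ℕ} (hn : n ≠ 0) : q (s n) ^ n = Complex.exp (-(v / 2) : ℝ) := by
    rw [← Complex.exp_nat_mul, ← Complex.ofReal_natCast, ← Complex.ofReal_mul, ← hs_sq, mul_neg,
      inv_mul_cancel_left₀ (by simpa [s] using hn)]
  have hdiff : Tendsto (fun s => e - W s) (𝓝 0) (𝓝 0) := by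
    simpa using hW.const_sub e
  have hdrop (m : ℕ → ℕ) : Tendsto (fun n => ℓ (s n) (m n) (e - W (s n))) atTop (𝓝 0) :=
    squeeze_zero_norm (fun n => hℓ _ _ _) (tendsto_zero_iff_norm_tendsto_zero.1 (hdiff.comp hs))
  have herr : Tendsto (fun n => ℓ (s n) n (W (s n)) - q (s n) ^ n * ℓ (s n) 0 (W (s n)))
      atTop (𝓝 0) := by
    refine squeeze_zero_norm (fun n => norm_sub_pow_mul_le (hℓ _) (hstep _) (hq_norm _) _ n) ?_
    refine ((happrox.norm_left.tendsto_div_nhds_zero).comp hs).congr fun n => ?_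
    rw [Function.comp_apply, div_eq_mul_inv, hs_sq, mul_comm]
  have hmain : Tendsto (fun n => Complex.exp (-(v / 2) : ℝ) *
      (ℓ (s n) 0 e - ℓ (s n) 0 (e - W (s n)))) atTop (𝓝 (Complex.exp (-(v / 2) : ℝ))) := by
    simpa using ((hinit.comp hs).sub (hdrop fun _ => 0)).const_mul (Complex.exp (-(v / 2) : ℝ))
  have hsum := ((hdrop id).add herr).add hmain
  rw [add_zero, zero_add] at hsum
  refine hsum.congr' ?_
  filter_upwards [eventually_ne_atTop 0] with n hn
  rw [hq_pow hn, map_sub, map_sub, id]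
  ring

end SpectralPerturbation

section Directions

variable {d : ℕ}

theorem exists_eq_lo_or_exists_eq_hi (a : Fin (2 * d)) : (∃ i, a = lo i) ∨ ∃ i, a = hi i := by
  rcases lt_or_ge (a : ℕ) d with ha | ha
  · exact .inl ⟨⟨a, ha⟩, rfl⟩
  · exact .inr ⟨⟨a - d, by lia⟩, Fin.ext (by simp [hi, ha])⟩

theorem dir_lo (i : Fin d) : dir d (lo i) = Pi.single i 1 := by
  ext j
  simp only [dir, lo, i.isLt, if_true, Pi.single_apply, Fin.val_inj]

theorem dir_hi (i : Fin d) : dir d (hi i) = Pi.single i (-1) := by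
  ext j
  simp [dir, hi, Pi.single_apply, Fin.ext_iff]

theorem dir_injective (d : ℕ) : Function.Injective (dir d) := by
  intro a b hab
  rcases exists_eq_lo_or_exists_eq_hi a with ⟨i, rfl⟩ | ⟨i, rfl⟩ <;>
  rcases exists_eq_lo_or_exists_eq_hi b with ⟨j, rfl⟩ | ⟨j, rfl⟩ <;>
  · have hcoord := congrFun hab i
    by_cases hij : i = j <;> simp_all [dir_lo, dir_hi]

theorem sum_eq_sum_lo_add_sum_hi {M : Type*} [AddCommMonoid M] (f : Fin (2 * d) → M) :
    ∑ a, f a = ∑ i, f (lo i) + ∑ i, f (hi i) := by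
  rw [← (finSumFinEquiv.trans (finCongr (two_mul d).symm)).sum_comp f, Fintype.sum_sum_type]
  congr 1
  exact sum_congr rfl fun i _ => congrArg f (Fin.ext (add_comm _ _))

theorem sum_dirR_mul (f : Fin (2 * d) → ℝ) (i : Fin d) :
    ∑ a, dirR d a i * f a = f (lo i) - f (hi i) := by
  simp [sum_eq_sum_lo_add_sum_hi, dirR, dir_lo, dir_hi, Pi.single_apply, sub_eq_add_neg]

theorem sum_dirR_mul_dirR_mul (f : Fin (2 * d) → ℝ) (i j : Fin d) :
    ∑ a, dirR d a i * (dirR d a j * f a) = if i = j then f (lo i) + f (hi i) else 0 := by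
  rw [sum_dirR_mul]
  by_cases hij : i = j <;> simp [dirR, dir_lo, dir_hi, Ne.symm, hij]

end Directions

section Trajectory

theorem integral_smul_eq_integral_condExp_smul {Ω E : Type*} {m mΩ : MeasurableSpace Ω}
    {μ : Measure Ω} [NormedAddCommGroup E] [NormedSpace ℝ E] [CompleteSpace E] (hm : m ≤ mΩ)
    [SigmaFinite (μ.trim hm)] {f : Ω → ℝ} {g : Ω → E} (hf : Integrable f μ)
    (hg : StronglyMeasurable[m] g) (hfg : Integrable (fun ω => f ω • g ω) μ) :
    ∫ ω, f ω • g ω ∂μ = ∫ ω, (μ[f | m]) ω • g ω ∂μ := by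
  rw [← integral_condExp hm]
  exact integral_congr_ae (condExp_bilin_of_stronglyMeasurable_right
    (ContinuousLinearMap.lsmul ℝ ℝ : ℝ →L[ℝ] E →L[ℝ] E) hg hfg hf)

instance {k : ℕ} : BorelSpace (Matrix (Fin k) (Fin k) ℂ) :=
  inferInstanceAs (BorelSpace (Fin k → Fin k → ℂ))

open scoped Matrix.Norms.Frobenius

variable {k d : ℕ} {σ : Matrix (Fin k) (Fin k) ℂ}

/-- The state reached from `σ` after the measurement outcome with Kraus operator `B`; it is `0` when
that outcome has probability zero. -/
def posterior (B σ : Matrix (Fin k) (Fin k) ℂ) : Matrix (Fin k) (Fin k) ℂ :=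
  (B * σ * Bᴴ).trace⁻¹ • (B * σ * Bᴴ)

theorem measurable_posterior (B : Matrix (Fin k) (Fin k) ℂ) : Measurable (posterior B) := by
  unfold posterior
  fun_prop

theorem norm_posterior_le_one (B : Matrix (Fin k) (Fin k) ℂ) (hσ : σ.PosSemidef) :
    ‖posterior B σ‖ ≤ 1 := by
  by_cases htr : (B * σ * Bᴴ).trace = 0
  · simp [posterior, htr]
  · exact (isDensity_inv_trace_smul (hσ.mul_mul_conjTranspose_same B) htr).norm_le_one

theorem re_trace_mul_trace_posterior_mul (B M : Matrix (Fin k) (Fin k) ℂ) (hσ : σ.PosSemidef) :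
    ((B * σ * Bᴴ).trace.re : ℂ) * (posterior B σ * M).trace = (B * σ * Bᴴ * M).trace := by
  have hB := hσ.mul_mul_conjTranspose_same B
  have hre : ((B * σ * Bᴴ).trace.re : ℂ) = (B * σ * Bᴴ).trace := by
    simpa using ofReal_re_trace_mul hB.isHermitian isHermitian_one
  rw [hre, posterior, Matrix.smul_mul, trace_smul, smul_eq_mul]
  by_cases htr : (B * σ * Bᴴ).trace = 0
  · simp [hB.trace_eq_zero_iff.1 htr]
  · rw [mul_inv_cancel_left₀ htr]

variable {Ω : Type} {mΩ : MeasurableSpace Ω}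

/-- The indicator of the event that the `n`-th jump of `X` is in direction `j`. -/
def jumpIndicator (X : ℕ → Ω → Fin d → ℤ) (n : ℕ) (j : Fin (2 * d)) (ω : Ω) : ℝ :=
  if X (n + 1) ω = X n ω + dir d j then 1 else 0

theorem norm_jumpIndicator_le_one (X : ℕ → Ω → Fin d → ℤ) (n : ℕ) (j : Fin (2 * d)) (ω : Ω) :
    ‖jumpIndicator X n j ω‖ ≤ 1 := by
  unfold jumpIndicator
  split_ifs <;> simp

theorem sum_jumpIndicator_smul {E : Type*} [AddCommGroup E] [Module ℝ E] {X : ℕ → Ω → Fin d → ℤ}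
    {n : ℕ} {j : Fin (2 * d)} {ω : Ω} (hj : X (n + 1) ω = X n ω + dir d j) (g : Fin (2 * d) → E) :
    ∑ i, jumpIndicator X n i ω • g i = g j := by
  simp [jumpIndicator, hj, (dir_injective d).eq_iff]

theorem sum_jumpIndicator_le_one (X : ℕ → Ω → Fin d → ℤ) (n : ℕ) (ω : Ω) :
    ∑ j, jumpIndicator X n j ω ≤ 1 := by
  by_cases hjump : ∃ j, X (n + 1) ω = X n ω + dir d j
  · obtain ⟨j, hj⟩ := hjump
    simpa using (sum_jumpIndicator_smul hj fun _ => (1 : ℝ)).le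
  · simp [jumpIndicator, not_exists.1 hjump]

namespace IsQTraj

variable {A : Fin (2 * d) → Matrix (Fin k) (Fin k) ℂ} {μ : Measure Ω} {ℱ : Filtration ℕ mΩ}
  {ρ : ℕ → Ω → Matrix (Fin k) (Fin k) ℂ} {X : ℕ → Ω → Fin d → ℤ}

theorem measurable_jumpIndicator (hQT : IsQTraj A μ ℱ ρ X) (n : ℕ) (j : Fin (2 * d)) :
    Measurable (jumpIndicator X n j) :=
  .ite (measurableSet_eq_fun ((hQT.adapted_X (n + 1)).mono (ℱ.le _) le_rfl)
    (((hQT.adapted_X n).mono (ℱ.le _) le_rfl).add_const _)) measurable_const measurable_const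

theorem integrable_jumpIndicator_smul (hQT : IsQTraj A μ ℱ ρ X) (n : ℕ) (j : Fin (2 * d))
    {g : Ω → ℂ} (hg : Integrable g μ) : Integrable (fun ω => jumpIndicator X n j ω • g ω) μ :=
  hg.bdd_smul 1 (hQT.measurable_jumpIndicator n j).aestronglyMeasurable
    (.of_forall (norm_jumpIndicator_le_one X n j))

variable [IsProbabilityMeasure μ]

theorem integrable_jumpIndicator (hQT : IsQTraj A μ ℱ ρ X) (n : ℕ) (j : Fin (2 * d)) :
    Integrable (jumpIndicator X n j) μ :=
  .of_bound (hQT.measurable_jumpIndicator n j).aestronglyMeasurable 1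
    (.of_forall (norm_jumpIndicator_le_one X n j))

theorem integral_jumpIndicator_smul (hQT : IsQTraj A μ ℱ ρ X) (n : ℕ) (j : Fin (2 * d)) {g : Ω → ℂ}
    (hg : Measurable[ℱ n] g) (hgint : Integrable g μ) :
    ∫ ω, jumpIndicator X n j ω • g ω ∂μ =
      ∫ ω, (A j * ρ n ω * (A j)ᴴ).trace.re • g ω ∂μ := by
  rw [integral_smul_eq_integral_condExp_smul (ℱ.le n) (hQT.integrable_jumpIndicator n j)
    hg.stronglyMeasurable (hQT.integrable_jumpIndicator_smul n j hgint)]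
  refine integral_congr_ae ?_
  filter_upwards [hQT.prob n j] with ω hω
  exact congrArg (· • g ω) hω

theorem sum_integral_jumpIndicator (hA : ∑ j, (A j)ᴴ * A j = 1) (hQT : IsQTraj A μ ℱ ρ X) (n : ℕ) :
    ∑ j, ∫ ω, jumpIndicator X n j ω ∂μ = 1 := by
  have hcond (j : Fin (2 * d)) : ∫ ω, jumpIndicator X n j ω ∂μ =
      ∫ ω, (A j * ρ n ω * (A j)ᴴ).trace.re ∂μ := by
    rw [← integral_condExp (ℱ.le n)]
    exact integral_congr_ae (hQT.prob n j)
  have hint (j : Fin (2 * d)) : Integrable (fun ω => (A j * ρ n ω * (A j)ᴴ).trace.re) μ :=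
    integrable_condExp.congr (hQT.prob n j)
  calc ∑ j, ∫ ω, jumpIndicator X n j ω ∂μ
      = ∫ ω, ∑ j, (A j * ρ n ω * (A j)ᴴ).trace.re ∂μ := by
        rw [integral_finsetSum _ fun j _ => hint j]
        exact sum_congr rfl fun j _ => hcond j
    _ = ∫ _, (1 : ℝ) ∂μ := by
        refine integral_congr_ae ?_
        filter_upwards [hQT.density n] with ω hω
        rw [← Complex.re_sum, ← trace_sum, ← krausMap_apply, (hω.krausMap hA).2, Complex.one_re]
    _ = 1 := by simp

theorem ae_exists_jump (hA : ∑ j, (A j)ᴴ * A j = 1) (hQT : IsQTraj A μ ℱ ρ X) (n : ℕ) :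
    ∀ᵐ ω ∂μ, ∃ j, X (n + 1) ω = X n ω + dir d j := by
  have hint : Integrable (fun ω => ∑ j, jumpIndicator X n j ω) μ :=
    integrable_finsetSum _ fun j _ => hQT.integrable_jumpIndicator n j
  have hzero : ∫ ω, (1 - ∑ j, jumpIndicator X n j ω) ∂μ = 0 := by
    rw [integral_sub (integrable_const 1) hint,
      integral_finsetSum _ fun j _ => hQT.integrable_jumpIndicator n j,
      hQT.sum_integral_jumpIndicator hA n]
    simp
  have hae := (integral_eq_zero_iff_of_nonneg
    (fun ω => sub_nonneg.2 (sum_jumpIndicator_le_one X n ω))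
    ((integrable_const 1).sub hint)).1 hzero
  filter_upwards [hae] with ω hω
  by_contra hnone
  simp [jumpIndicator, not_exists.1 hnone] at hω

theorem integral_succ_eq_sum (hA : ∑ j, (A j)ᴴ * A j = 1) (hQT : IsQTraj A μ ℱ ρ X)
    {F : Matrix (Fin k) (Fin k) ℂ → (Fin d → ℤ) → ℂ} {C : ℝ} (hF : Measurable (Function.uncurry F))
    (hC : ∀ σ x, ‖σ‖ ≤ 1 → ‖F σ x‖ ≤ C) (n : ℕ) :
    ∫ ω, F (ρ (n + 1) ω) (X (n + 1) ω) ∂μ = ∑ j, ∫ ω,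
      (A j * ρ n ω * (A j)ᴴ).trace.re • F (posterior (A j) (ρ n ω)) (X n ω + dir d j) ∂μ := by
  set g : Fin (2 * d) → Ω → ℂ := fun j ω => F (posterior (A j) (ρ n ω)) (X n ω + dir d j)
  have hg (j : Fin (2 * d)) : Measurable[ℱ n] (g j) :=
    hF.comp (((measurable_posterior _).comp (hQT.adapted_ρ n)).prodMk
      ((hQT.adapted_X n).add_const _))
  have hgint (j : Fin (2 * d)) : Integrable (g j) μ := by
    refine .of_bound ((hg j).mono (ℱ.le n) le_rfl).aestronglyMeasurable C ?_
    filter_upwards [hQT.density n] with ω hω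
    exact hC _ _ (norm_posterior_le_one _ hω.1)
  calc ∫ ω, F (ρ (n + 1) ω) (X (n + 1) ω) ∂μ
      = ∫ ω, ∑ j, jumpIndicator X n j ω • g j ω ∂μ := by
        refine integral_congr_ae ?_
        filter_upwards [hQT.ae_exists_jump hA n, ae_all_iff.2 (hQT.update n)] with ω ⟨j, hj⟩ hupd
        rw [sum_jumpIndicator_smul hj fun j => g j ω, hupd j hj, hj]
        rfl
    _ = ∑ j, ∫ ω, jumpIndicator X n j ω • g j ω ∂μ :=
        integral_finsetSum _ fun j _ => hQT.integrable_jumpIndicator_smul n j (hgint j)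
    _ = _ := sum_congr rfl fun j _ => hQT.integral_jumpIndicator_smul n j (hg j) (hgint j)

end IsQTraj

/-- The real phase `⟨u, x - n m⟩`. -/
def centeredPhase (m u : Fin d → ℝ) (n : ℕ) (x : Fin d → ℤ) : ℝ := ∑ i, u i * (x i - n * m i)

theorem centeredPhase_succ (m u : Fin d → ℝ) (n : ℕ) (x : Fin d → ℤ) (j : Fin (2 * d)) :
    centeredPhase m u (n + 1) (x + dir d j) =
      centeredPhase m u n x + ∑ i, u i * (dirR d j i - m i) := by
  simp only [centeredPhase, dirR, Pi.add_apply, ← sum_add_distrib]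
  refine sum_congr rfl fun i _ => ?_
  push_cast
  ring

/-- The observable `exp(i⟨u, x - n m⟩) Tr(σ M)` of the state `σ` and the position `x`. -/
def phasedTrace (m u : Fin d → ℝ) (n : ℕ) (M σ : Matrix (Fin k) (Fin k) ℂ) (x : Fin d → ℤ) : ℂ :=
  Complex.exp (centeredPhase m u n x * Complex.I) * (σ * M).trace

theorem measurable_exp_centeredPhase (m u : Fin d → ℝ) (n : ℕ) :
    Measurable fun x => Complex.exp (centeredPhase m u n x * Complex.I) :=
  measurable_of_countable _

theorem measurable_phasedTrace (m u : Fin d → ℝ) (n : ℕ) (M : Matrix (Fin k) (Fin k) ℂ) :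
    Measurable (Function.uncurry (phasedTrace m u n M)) := by
  have htrace : Continuous fun σ : Matrix (Fin k) (Fin k) ℂ => (σ * M).trace := by fun_prop
  exact ((measurable_exp_centeredPhase m u n).comp measurable_snd).mul
    (htrace.measurable.comp measurable_fst)

theorem norm_phasedTrace_le (m u : Fin d → ℝ) (n : ℕ) (M : Matrix (Fin k) (Fin k) ℂ) (hσ : ‖σ‖ ≤ 1)
    (x : Fin d → ℤ) : ‖phasedTrace m u n M σ x‖ ≤ ‖M‖ := by
  rw [phasedTrace, norm_mul, Complex.norm_exp_ofReal_mul_I, one_mul]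
  exact (norm_trace_mul_le σ M).trans (mul_le_of_le_one_left (norm_nonneg M) hσ)

theorem re_trace_smul_phasedTrace_posterior (m u : Fin d → ℝ) (n : ℕ)
    (A : Fin (2 * d) → Matrix (Fin k) (Fin k) ℂ) (M : Matrix (Fin k) (Fin k) ℂ)
    (hσ : σ.PosSemidef) (x : Fin d → ℤ) (j : Fin (2 * d)) :
    (A j * σ * (A j)ᴴ).trace.re • phasedTrace m u (n + 1) M (posterior (A j) σ) (x + dir d j) =
      Complex.exp ((∑ i, u i * (dirR d j i - m i) : ℝ) * Complex.I)
        • phasedTrace m u n ((A j)ᴴ * M * A j) σ x := by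
  have hcycle : (σ * ((A j)ᴴ * M * A j)).trace = (A j * σ * (A j)ᴴ * M).trace := by
    rw [← Matrix.mul_assoc, trace_mul_comm]
    simp only [Matrix.mul_assoc]
  simp only [phasedTrace, hcycle, ← re_trace_mul_trace_posterior_mul (A j) M hσ,
    centeredPhase_succ, Complex.ofReal_add, add_mul, Complex.exp_add, Complex.real_smul,
    smul_eq_mul]
  ring

namespace IsQTraj

variable {A : Fin (2 * d) → Matrix (Fin k) (Fin k) ℂ} {μ : Measure Ω} [IsProbabilityMeasure μ]
  {ℱ : Filtration ℕ mΩ} {ρ : ℕ → Ω → Matrix (Fin k) (Fin k) ℂ} {X : ℕ → Ω → Fin d → ℤ}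

theorem integrable_phasedTrace (hQT : IsQTraj A μ ℱ ρ X) (m u : Fin d → ℝ) (n : ℕ)
    (M : Matrix (Fin k) (Fin k) ℂ) :
    Integrable (fun ω => phasedTrace m u n M (ρ n ω) (X n ω)) μ := by
  have hρ : Measurable (ρ n) := (hQT.adapted_ρ n).mono (ℱ.le n) le_rfl
  have hX : Measurable (X n) := (hQT.adapted_X n).mono (ℱ.le n) le_rfl
  have hmeas : Measurable (Function.uncurry (phasedTrace m u n M) ∘ fun ω => (ρ n ω, X n ω)) :=
    (measurable_phasedTrace m u n M).comp (hρ.prodMk hX)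
  refine .of_bound hmeas.aestronglyMeasurable ‖M‖ ?_
  filter_upwards [hQT.density n] with ω hω
  exact norm_phasedTrace_le m u n M hω.norm_le_one _

/-- The functional `M ↦ 𝔼[exp(i⟨u, Xₙ - n m⟩) Tr(ρₙ M)]`, whose value at `1` is the characteristic
function of `Xₙ - n m` at `u`. -/
def charFunctional (hQT : IsQTraj A μ ℱ ρ X) (m u : Fin d → ℝ) (n : ℕ) :
    Matrix (Fin k) (Fin k) ℂ →ₗ[ℂ] ℂ where
  toFun M := ∫ ω, phasedTrace m u n M (ρ n ω) (X n ω) ∂μ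
  map_add' M N := by
    rw [← integral_add (hQT.integrable_phasedTrace m u n M) (hQT.integrable_phasedTrace m u n N)]
    simp only [phasedTrace, trace_add, mul_add]
  map_smul' a M := by
    simp only [phasedTrace, trace_smul, mul_smul_comm, integral_smul, RingHom.id_apply]

theorem charFunctional_apply (hQT : IsQTraj A μ ℱ ρ X) (m u : Fin d → ℝ) (n : ℕ)
    (M : Matrix (Fin k) (Fin k) ℂ) :
    hQT.charFunctional m u n M = ∫ ω, phasedTrace m u n M (ρ n ω) (X n ω) ∂μ :=
  rfl

theorem charFunctional_one (hQT : IsQTraj A μ ℱ ρ X) (m u : Fin d → ℝ) (n : ℕ) :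
    hQT.charFunctional m u n 1 =
      ∫ ω, Complex.exp (centeredPhase m u n (X n ω) * Complex.I) ∂μ := by
  rw [charFunctional_apply]
  refine integral_congr_ae ?_
  filter_upwards [hQT.density n] with ω hω
  rw [phasedTrace, Matrix.mul_one, hω.2, _root_.mul_one]

theorem norm_charFunctional_le (hQT : IsQTraj A μ ℱ ρ X) (m u : Fin d → ℝ) (n : ℕ)
    (M : Matrix (Fin k) (Fin k) ℂ) : ‖hQT.charFunctional m u n M‖ ≤ ‖M‖ := by
  have hbound : ∀ᵐ ω ∂μ, ‖phasedTrace m u n M (ρ n ω) (X n ω)‖ ≤ ‖M‖ := by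
    filter_upwards [hQT.density n] with ω hω
    exact norm_phasedTrace_le m u n M hω.norm_le_one _
  simpa [charFunctional_apply] using norm_integral_le_of_norm_le_const hbound

theorem charFunctional_succ (hA : ∑ j, (A j)ᴴ * A j = 1) (hQT : IsQTraj A μ ℱ ρ X)
    (m u : Fin d → ℝ) (n : ℕ) (M : Matrix (Fin k) (Fin k) ℂ) :
    hQT.charFunctional m u (n + 1) M = hQT.charFunctional m u n (weightedDual A
      (fun j => Complex.exp ((∑ i, u i * (dirR d j i - m i) : ℝ) * Complex.I)) M) := by
  rw [charFunctional_apply, hQT.integral_succ_eq_sum hA (measurable_phasedTrace m u (n + 1) M)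
    fun σ x hσ => norm_phasedTrace_le m u (n + 1) M hσ x, weightedDual_apply, map_sum]
  refine sum_congr rfl fun j _ => ?_
  rw [map_smul, charFunctional_apply, ← integral_smul]
  refine integral_congr_ae ?_
  filter_upwards [hQT.density n] with ω hω
  exact re_trace_smul_phasedTrace_posterior m u n A M hω.1 _ j

theorem tendsto_charFunctional_zero_one (hQT : IsQTraj A μ ℱ ρ X) (m t : Fin d → ℝ) :
    Tendsto (fun s : ℝ => hQT.charFunctional m (s • t) 0 1) (𝓝 0) (𝓝 1) := by
  have hlim : ∫ ω, Complex.exp (centeredPhase m ((0 : ℝ) • t) 0 (X 0 ω) * Complex.I) ∂μ = 1 := by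
    simp [centeredPhase]
  simp only [charFunctional_one, ← hlim]
  refine tendsto_integral_filter_of_norm_le_const (.of_forall fun s => ?_) ⟨1, .of_forall fun s =>
    .of_forall fun ω => (Complex.norm_exp_ofReal_mul_I _).le⟩ (.of_forall fun ω => ?_)
  · exact ((measurable_exp_centeredPhase m (s • t) 0).comp
      ((hQT.adapted_X 0).mono (ℱ.le 0) le_rfl)).aestronglyMeasurable
  · refine Continuous.tendsto ?_ 0
    unfold centeredPhase
    fun_prop

end IsQTraj

end Trajectory

section Covariance

variable {k d : ℕ} {A : Fin (2 * d) → Matrix (Fin k) (Fin k) ℂ}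
  {ρinf : Matrix (Fin k) (Fin k) ℂ} {LL : Fin d → Matrix (Fin k) (Fin k) ℂ}

theorem Cmat_eq_sum (htr : ρinf.trace = 1)
    (hinv : krausMap A ρinf = ρinf) (i j : Fin d) :
    Cmat A ρinf LL i j = ∑ a,
      ((dirR d a i - mvec A ρinf i) * (dirR d a j - mvec A ρinf j)
          * (A a * ρinf * (A a)ᴴ).trace.re
        + (dirR d a i - mvec A ρinf i) * (A a * ρinf * (A a)ᴴ * LL j).trace.re
        + (dirR d a j - mvec A ρinf j) * (A a * ρinf * (A a)ᴴ * LL i).trace.re) := by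
  set p : Fin (2 * d) → ℝ := fun a => (A a * ρinf * (A a)ᴴ).trace.re
  set g : Fin (2 * d) → Fin d → ℝ := fun a i => (A a * ρinf * (A a)ᴴ * LL i).trace.re
  have hmass : ∑ a, p a = 1 := by
    rw [← Complex.re_sum, ← trace_sum, ← krausMap_apply, hinv, htr, Complex.one_re]
  have hmean (i : Fin d) : ∑ a, dirR d a i * p a = mvec A ρinf i :=
    sum_congr rfl fun a _ => mul_comm _ _
  have hjump : ∑ a, (dirR d a i - mvec A ρinf i) * (dirR d a j - mvec A ρinf j) * p a =
      (if i = j then p (lo i) + p (hi i) else 0) - mvec A ρinf i * mvec A ρinf j := by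
    rw [← sum_dirR_mul_dirR_mul]
    calc _ = ∑ a, (dirR d a i * (dirR d a j * p a) - mvec A ρinf i * (dirR d a j * p a)
          - mvec A ρinf j * (dirR d a i * p a) + mvec A ρinf i * mvec A ρinf j * p a) :=
          sum_congr rfl fun a _ => by ring
      _ = _ := by
          rw [sum_add_distrib, sum_sub_distrib, sum_sub_distrib, ← mul_sum, ← mul_sum, ← mul_sum,
            hmean, hmean, hmass]
          ring
  have hcross (i j : Fin d) : ∑ a, (dirR d a i - mvec A ρinf i) * g a j =
      g (lo i) j - g (hi i) j - mvec A ρinf i * (ρinf * LL j).trace.re := by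
    have hg : ∑ a, g a j = (ρinf * LL j).trace.re := by
      rw [← Complex.re_sum, ← trace_sum, ← sum_mul, ← krausMap_apply, hinv]
    simp only [sub_mul, sum_sub_distrib, ← mul_sum, hg, sum_dirR_mul fun a => g a j]
  rw [sum_add_distrib, sum_add_distrib, hjump, hcross, hcross]
  simp only [Cmat, p, g]
  ring

theorem sum_sum_mul_symm_mul {ι : Type*} [Fintype ι] (t u v : ι → ℝ) (p : ℝ) :
    ∑ i, ∑ j, t i * (u i * u j * p + u i * v j + u j * v i) * t j =
      (∑ i, t i * u i) ^ 2 * p + 2 * ((∑ i, t i * u i) * ∑ i, t i * v i) := by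
  have hterm (i j : ι) : t i * (u i * u j * p + u i * v j + u j * v i) * t j =
      t i * u i * (t j * u j) * p + t i * u i * (t j * v j) + t i * v i * (t j * u j) := by ring
  simp only [hterm, sum_add_distrib, ← sum_mul, ← sum_mul_sum]
  ring

theorem sum_mul_Cmat_mul (htr : ρinf.trace = 1)
    (hinv : krausMap A ρinf = ρinf) (t : Fin d → ℝ) :
    ∑ i, ∑ j, t i * Cmat A ρinf LL i j * t j =
      asymptoticVariance A ρinf (fun a => ∑ i, t i * (dirR d a i - mvec A ρinf i))
        (∑ i, t i • LL i) := by
  have hlin (P : Matrix (Fin k) (Fin k) ℂ) :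
      (P * ∑ i, t i • LL i).trace.re = ∑ i, t i * (P * LL i).trace.re := by
    simp [mul_sum, trace_sum]
  have hswap (F : Fin d → Fin d → Fin (2 * d) → ℝ) :
      ∑ i, ∑ j, t i * (∑ a, F i j a) * t j = ∑ a, ∑ i, ∑ j, t i * F i j a * t j := by
    simp only [mul_sum, sum_mul]
    exact sum_comm_cycle
  simp only [Cmat_eq_sum htr hinv, hswap, asymptoticVariance, hlin]
  exact sum_congr rfl fun a _ => sum_sum_mul_symm_mul t _ _ _

theorem Cmat_comm (i j : Fin d) : Cmat A ρinf LL i j = Cmat A ρinf LL j i := by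
  simp only [Cmat, eq_comm (a := i)]
  split_ifs with hij <;> [rw [hij]; ring]

theorem posSemidef_Cmat (hA : ∑ j, (A j)ᴴ * A j = 1) (hρinf : IsDensity ρinf)
    (hinv : krausMap A ρinf = ρinf)
    (hLL : ∀ i, IsPoissonSolution A (fun j => dirR d j i - mvec A ρinf i) (LL i)) :
    (Matrix.of (Cmat A ρinf LL)).PosSemidef := by
  refine .of_dotProduct_mulVec_nonneg (IsHermitian.ext fun i j => Cmat_comm j i) fun t => ?_
  have hquad := sum_mul_Cmat_mul (LL := LL) hρinf.2 hinv t
  simp only [dotProduct, mulVec, of_apply, mul_sum, star_trivial, ← mul_assoc, hquad]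
  exact (IsPoissonSolution.sum_smul hLL t).asymptoticVariance_nonneg hA hρinf.1 hinv

end Covariance

section LevyContinuity

open ProbabilityTheory

variable {ι : Type*} [Fintype ι]

theorem charFun_map_toLp {Ω : Type*} {mΩ : MeasurableSpace Ω} {μ : Measure Ω} {Y : Ω → ι → ℝ}
    (hY : Measurable Y) (t : EuclideanSpace ℝ ι) :
    charFun (μ.map (WithLp.toLp 2 ∘ Y)) t =
      ∫ ω, Complex.exp (Complex.I * (∑ j, t j * Y ω j : ℝ)) ∂μ := by
  rw [charFun_apply, integral_map (by fun_prop) (by fun_prop)]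
  simp only [Function.comp_apply, PiLp.inner_apply, mul_comm Complex.I]
  rfl

theorem tendsto_integral_of_tendsto_integral_exp {Ω : Type*} {mΩ : MeasurableSpace Ω}
    {μ : Measure Ω} [IsProbabilityMeasure μ] {ν : Measure (ι → ℝ)} [IsProbabilityMeasure ν]
    {Y : ℕ → Ω → ι → ℝ} (hY : ∀ n, Measurable (Y n))
    (hchar : ∀ t : ι → ℝ, Tendsto
      (fun n => ∫ ω, Complex.exp (Complex.I * (∑ j, t j * Y n ω j : ℝ)) ∂μ) atTop
      (𝓝 (∫ x, Complex.exp (Complex.I * (∑ j, t j * x j : ℝ)) ∂ν)))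
    (f : BoundedContinuousFunction (ι → ℝ) ℝ) :
    Tendsto (fun n => ∫ ω, f (Y n ω) ∂μ) atTop (𝓝 (∫ x, f x ∂ν)) := by
  let law (n : ℕ) : ProbabilityMeasure (EuclideanSpace ℝ ι) :=
    ⟨μ.map (WithLp.toLp 2 ∘ Y n), Measure.isProbabilityMeasure_map (by fun_prop)⟩
  let limitLaw : ProbabilityMeasure (EuclideanSpace ℝ ι) :=
    ⟨ν.map (WithLp.toLp 2 ∘ id), Measure.isProbabilityMeasure_map (by fun_prop)⟩
  have hlaw : Tendsto law atTop (𝓝 limitLaw) := by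
    refine ProbabilityMeasure.tendsto_of_tendsto_charFun fun t => ?_
    simpa only [law, limitLaw, ProbabilityMeasure.coe_mk, charFun_map_toLp (hY _),
      charFun_map_toLp measurable_id, id] using hchar t
  have hint := ProbabilityMeasure.tendsto_iff_forall_integral_tendsto.1 hlaw
    (f.compContinuous ⟨WithLp.ofLp, PiLp.continuous_ofLp 2 _⟩)
  have hlimit : ∫ x : EuclideanSpace ℝ ι, f x.ofLp ∂limitLaw = ∫ x, f x ∂ν :=
    integral_map (by fun_prop) (by fun_prop)
  rw [← hlimit]
  refine hint.congr fun n => ?_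
  exact integral_map (μ := μ) (φ := WithLp.toLp 2 ∘ Y n) (by fun_prop) (by fun_prop)

/-- The centered Gaussian law with covariance `S` on the space `ι → ℝ` with its product topology. -/
def piGaussian [DecidableEq ι] (S : Matrix ι ι ℝ) : Measure (ι → ℝ) :=
  (multivariateGaussian 0 S).map WithLp.ofLp

instance [DecidableEq ι] (S : Matrix ι ι ℝ) : IsProbabilityMeasure (piGaussian S) :=
  Measure.isProbabilityMeasure_map (by fun_prop)

theorem integral_exp_piGaussian [DecidableEq ι] {S : Matrix ι ι ℝ} (hS : S.PosSemidef)
    (t : ι → ℝ) :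
    ∫ x, Complex.exp (Complex.I * (∑ j, t j * x j : ℝ)) ∂piGaussian S =
      Complex.exp (-((∑ i, ∑ j, t i * S i j * t j) / 2 : ℝ)) := by
  have hmap : (piGaussian S).map (WithLp.toLp 2 ∘ id) = multivariateGaussian 0 S := by
    rw [piGaussian, Measure.map_map (by fun_prop) (by fun_prop)]
    exact Measure.map_id
  have hchar := charFun_map_toLp (μ := piGaussian S) measurable_id (WithLp.toLp 2 t)
  rw [hmap, charFun_multivariateGaussian hS] at hchar
  refine hchar.symm.trans (congrArg Complex.exp ?_)
  simp [dotProduct, mulVec, mul_sum, mul_assoc]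

end LevyContinuity

section CentralLimit

open scoped ComplexStarModule Matrix.Norms.Frobenius

variable {k d : ℕ} {A : Fin (2 * d) → Matrix (Fin k) (Fin k) ℂ}
  {ρinf L : Matrix (Fin k) (Fin k) ℂ}

theorem exists_approx_eigenvector {ι : Type*} [Fintype ι] {A : ι → Matrix (Fin k) (Fin k) ℂ}
    {c : ι → ℝ} (hA : ∑ j, (A j)ᴴ * A j = 1) (hρinf : IsDensity ρinf)
    (huniq : ∀ σ, IsDensity σ → krausMap A σ = σ → σ = ρinf) (hL : IsPoissonSolution A c L) :
    ∃ W : ℝ → Matrix (Fin k) (Fin k) ℂ, Tendsto W (𝓝 0) (𝓝 1) ∧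
      (fun s : ℝ => weightedDual A (fun j => Complex.exp ((s * c j : ℝ) * Complex.I)) (W s)
        - Complex.exp (-(s ^ 2 * (asymptoticVariance A ρinf c L / 2)) : ℝ) • W s)
          =o[𝓝 0] fun s => s ^ 2 := by
  obtain ⟨Z, hZ⟩ := exists_second_corrector c hA hρinf huniq (ℜ L).2
  rw [asymptoticVariance_realPart A hρinf.1] at hZ
  set W : ℂ → Matrix (Fin k) (Fin k) ℂ := fun z => 1 + z • (ℜ L : Matrix _ _ ℂ) + z ^ 2 • Z
  have hperturb := perturbed_eigenvector_isLittleO (weightedDual A).toContinuousBilinearMap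
    (weightedDual_one_one hA) hL.realPart hZ
  have himag : Tendsto (fun s : ℝ => (s * Complex.I : ℂ)) (𝓝 0) (𝓝 0) :=
    Continuous.tendsto' (by fun_prop) _ _ (by simp)
  have hW : Tendsto W (𝓝 0) (𝓝 1) := Continuous.tendsto' (by fun_prop) _ _ (by simp [W])
  refine ⟨fun s => W (s * Complex.I), hW.comp himag, ?_⟩
  have hbigO : (fun s : ℝ => (s * Complex.I : ℂ) ^ 2) =O[𝓝 0] fun s => s ^ 2 :=
    .of_bound 1 (.of_forall fun s => by simp)
  refine ((hperturb.comp_tendsto himag).trans_isBigO hbigO).congr_left fun s => ?_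
  have hphase : (fun j => Complex.exp ((s * c j : ℝ) * Complex.I)) =
      fun j => Complex.exp (s * Complex.I * c j) := by
    simp only [Complex.ofReal_mul, mul_right_comm]
  have hdecay : Complex.exp (-(s ^ 2 * (asymptoticVariance A ρinf c L / 2)) : ℝ) =
      Complex.exp ((s * Complex.I) ^ 2 * (asymptoticVariance A ρinf c L / 2)) := by
    simp [mul_pow]
  rw [hphase, hdecay]
  rfl

theorem centeredPhase_inv_sqrt_smul (m t : Fin d → ℝ) (n : ℕ) (x : Fin d → ℤ) :
    centeredPhase m ((√n)⁻¹ • t) n x = ∑ j, t j * ((x j - n * m j) / √n) := by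
  simp only [centeredPhase, Pi.smul_apply, smul_eq_mul, div_eq_inv_mul, mul_left_comm (t _),
    mul_assoc]

namespace IsQTraj

variable {Ω : Type} {mΩ : MeasurableSpace Ω} {μ : Measure Ω}
  {ℱ : Filtration ℕ mΩ} {ρ : ℕ → Ω → Matrix (Fin k) (Fin k) ℂ} {X : ℕ → Ω → Fin d → ℤ}

theorem measurable_rescaled_position (hQT : IsQTraj A μ ℱ ρ X) (m : Fin d → ℝ) (n : ℕ) :
    Measurable fun ω j => ((X n ω j : ℝ) - n * m j) / √n :=
  (measurable_of_countable fun (x : Fin d → ℤ) j => ((x j : ℝ) - n * m j) / √n).comp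
    ((hQT.adapted_X n).mono (ℱ.le n) le_rfl)

variable [IsProbabilityMeasure μ]

theorem tendsto_integral_exp_rescaled_position (hQT : IsQTraj A μ ℱ ρ X)
    (hA : ∑ j, (A j)ᴴ * A j = 1) (hρinf : IsDensity ρinf) (hinv : krausMap A ρinf = ρinf)
    (huniq : ∀ σ, IsDensity σ → krausMap A σ = σ → σ = ρinf) (m t : Fin d → ℝ)
    (hL : IsPoissonSolution A (fun j => ∑ i, t i * (dirR d j i - m i)) L) :
    Tendsto (fun n : ℕ =>
        ∫ ω, Complex.exp (Complex.I * (∑ j, t j * ((X n ω j - n * m j) / √n) : ℝ)) ∂μ) atTop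
      (𝓝 (Complex.exp (-(asymptoticVariance A ρinf
        (fun j => ∑ i, t i * (dirR d j i - m i)) L / 2 : ℝ)))) := by
  obtain ⟨W, hW, happrox⟩ := exists_approx_eigenvector hA hρinf huniq hL
  simp only [← centeredPhase_inv_sqrt_smul, mul_comm Complex.I, ← hQT.charFunctional_one,
    ← Complex.ofReal_neg]
  refine tendsto_apply_of_approx_eigenvector (ℓ := fun s => hQT.charFunctional m (s • t))
    (hL.asymptoticVariance_nonneg hA hρinf.1 hinv)
    (fun s n M => hQT.norm_charFunctional_le m (s • t) n M)
    (fun s n M => ?_) (hQT.tendsto_charFunctional_zero_one m t) hW happrox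
  rw [hQT.charFunctional_succ hA]
  simp only [Pi.smul_apply, smul_eq_mul, mul_assoc, ← mul_sum]

end IsQTraj

end CentralLimit

/-- (Central Limit Theorem for open quantum random walks.) Under (H1),
`(X_n - n m)/√n` converges in distribution to the centered Gaussian `N(0, C)` on `ℝ^d`
(characterized by its characteristic function `l ↦ exp(-(l·Cl)/2)`), the matrix `C`
being symmetric positive semidefinite. -/
theorem stmt8 {k d : ℕ} (hd : 1 ≤ d)
    (A : Fin (2 * d) → Matrix (Fin k) (Fin k) ℂ)
    (hA : ∑ j, (A j)ᴴ * A j = 1)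
    (ρinf : Matrix (Fin k) (Fin k) ℂ) (hρinf : IsDensity ρinf)
    (hinv : (∑ j, A j * ρinf * (A j)ᴴ) = ρinf)
    (huniq : ∀ σ, IsDensity σ → (∑ j, A j * σ * (A j)ᴴ) = σ → σ = ρinf)
    (LL : Fin d → Matrix (Fin k) (Fin k) ℂ)
    (hLL : ∀ i : Fin d,
      LL i - (∑ j, (A j)ᴴ * LL i * A j) =
        (∑ j, dirR d j i • ((A j)ᴴ * A j)) -
          mvec A ρinf i • (1 : Matrix (Fin k) (Fin k) ℂ))
    {Ω : Type} {mΩ : MeasurableSpace Ω} (μ : Measure Ω) [IsProbabilityMeasure μ]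
    (ℱ : Filtration ℕ mΩ)
    (ρ : ℕ → Ω → Matrix (Fin k) (Fin k) ℂ) (X : ℕ → Ω → Fin d → ℤ)
    (hQT : IsQTraj A μ ℱ ρ X) :
    (∀ i j, Cmat A ρinf LL i j = Cmat A ρinf LL j i) ∧
    Matrix.PosSemidef (Matrix.of fun i j => Cmat A ρinf LL i j) ∧
    ∃ ν : Measure (Fin d → ℝ), IsProbabilityMeasure ν ∧
      (∀ l : Fin d → ℝ,
        ∫ x, Complex.exp (Complex.I * ((∑ j, l j * x j : ℝ) : ℂ)) ∂ν =
          Complex.exp (-(((∑ i, ∑ j, l i * Cmat A ρinf LL i j * l j) / 2 : ℝ) : ℂ))) ∧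
      ∀ f : BoundedContinuousFunction (Fin d → ℝ) ℝ,
        Tendsto
          (fun n : ℕ =>
            ∫ ω, f (fun j => ((X n ω j : ℝ) - n * mvec A ρinf j) / Real.sqrt n) ∂μ)
          atTop (nhds (∫ x, f x ∂ν)) := by
  have hinv' : krausMap A ρinf = ρinf := by rwa [krausMap_apply]
  have huniq' (σ) (hσ : IsDensity σ) (hfix : krausMap A σ = σ) : σ = ρinf :=
    huniq σ hσ (by rwa [krausMap_apply] at hfix)
  have hPoisson (i : Fin d) := IsPoissonSolution.of_sub_eq hA (hLL i)
  have hC := posSemidef_Cmat hA hρinf hinv' hPoisson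
  refine ⟨Cmat_comm, hC, piGaussian (.of (Cmat A ρinf LL)), inferInstance,
    integral_exp_piGaussian hC, tendsto_integral_of_tendsto_integral_exp
      (hQT.measurable_rescaled_position _) fun t => ?_⟩
  rw [integral_exp_piGaussian hC]
  simp only [of_apply, sum_mul_Cmat_mul hρinf.2 hinv']
  exact hQT.tendsto_integral_exp_rescaled_position hA hρinf hinv' huniq' _ t
    (.sum_smul hPoisson t)
end
end

section
/- (One-dimensional variance formula.) Let d = 1 and let A_1, A_2 be k×k complex matrices with A_1^* A_1 + A_2^* A_2 = I; assume the map L(ρ) = A_1 ρ A_1^* + A_2 ρ A_2^* admits a unique invariant state ρ_∞. Set m = Tr(A_1 ρ_∞ A_1^*) − Tr(A_2 ρ_∞ A_2^*), and let L be a solution of L − L^*(L) = 2 A_1^* A_1 − (1+m) I, where L^*(X) = A_1^* X A_1 + A_2^* X A_2. Then m = 1 − 2 Tr(A_2 ρ_∞ A_2^*) and the asymptotic variance of the associated open quantum random walk satisfies σ² = 1 − m² + 4( Re Tr(ρ_∞ A_1^* L A_1) − Tr(A_1 ρ_∞ A_1^*) · Re Tr(ρ_∞ L) ), where σ² = Re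 Tr(ρ_∞ Γ) with Γ = A_1^* A_1 (1−m)² + A_2^* A_2 (1+m)² + 2(1−m) A_1^* L A_1 − 2(1+m) A_2^* L A_2. -/
open MeasureTheory Filter Matrix Finset
open scoped ComplexOrder

noncomputable section

/-!
Write `φ x = Re Tr(ρ x)`. Invariance of the state `ρ` says that the unital functional `φ` is
fixed by the Heisenberg-picture map `x ↦ a₁* x a₁ + a₂* x a₂`, so `p = φ(a₁* a₁)` and
`q = φ(a₂* a₂)` satisfy `p + q = 1`. Applying `φ` to the Poisson equation kills its left-hand side
and leaves `m = 2p - 1`. Hence `1 + m = 2p` and `1 - m = 2q`, so that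
`φ(Γ) = 4pq + 4(q φ(a₁* L a₁) - p φ(a₂* L a₂))`; here `4pq = 1 - m²`, and invariance at `L`
eliminates `φ(a₂* L a₂)`.
-/

/-- The one-step evolution of observables (Heisenberg picture) of the walk with jump operators
`a₁` and `a₂`, written `L^*` in the matrix case. -/
def heisenbergMap {𝓐 : Type*} [NonUnitalNonAssocSemiring 𝓐] [Star 𝓐] (a₁ a₂ x : 𝓐) : 𝓐 :=
  star a₁ * x * a₁ + star a₂ * x * a₂

section InvariantFunctional

variable {R 𝓐 : Type*} [CommRing R] [Ring 𝓐] [Star 𝓐] [Algebra R 𝓐]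

/-- The observable `Γ` whose expectation in the invariant state is the asymptotic variance of the
walk with jumps `+1` (operator `a₁`) and `-1` (operator `a₂`), drift `m` and corrector `x`. The
corrector is meant to solve the Poisson equation but is arbitrary here. -/
def varianceObservable (m : R) (a₁ a₂ x : 𝓐) : 𝓐 :=
  (1 - m) ^ 2 • (star a₁ * a₁) + (1 + m) ^ 2 • (star a₂ * a₂) +
    (2 * (1 - m)) • (star a₁ * x * a₁) - (2 * (1 + m)) • (star a₂ * x * a₂)

variable {a₁ a₂ : 𝓐} {φ : 𝓐 →ₗ[R] R} {m : R}

lemma map_star_mul_self_add_eq_one (hφ_one : φ 1 = 1)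
    (hφ_inv : ∀ x, φ (heisenbergMap a₁ a₂ x) = φ x) :
    φ (star a₁ * a₁) + φ (star a₂ * a₂) = 1 := by
  simpa only [heisenbergMap, mul_one, map_add, hφ_one] using hφ_inv 1

lemma drift_eq_of_poisson {L : 𝓐} (hφ_one : φ 1 = 1)
    (hφ_inv : ∀ x, φ (heisenbergMap a₁ a₂ x) = φ x)
    (hL : L - heisenbergMap a₁ a₂ L = (2 : R) • (star a₁ * a₁) - (1 + m) • (1 : 𝓐)) :
    m = 1 - 2 * φ (star a₂ * a₂) := by
  have hφL : 0 = 2 * φ (star a₁ * a₁) - (1 + m) := by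
    simpa only [map_sub, map_smul, hφ_inv, sub_self, hφ_one, smul_eq_mul, mul_one] using
      congrArg φ hL
  linear_combination 2 * map_star_mul_self_add_eq_one hφ_one hφ_inv + hφL

lemma map_varianceObservable (hφ_one : φ 1 = 1)
    (hφ_inv : ∀ x, φ (heisenbergMap a₁ a₂ x) = φ x)
    (hm : m = 1 - 2 * φ (star a₂ * a₂)) (x : 𝓐) :
    φ (varianceObservable m a₁ a₂ x) =
      1 - m ^ 2 + 4 * (φ (star a₁ * x * a₁) - φ (star a₁ * a₁) * φ x) := by
  have hp : φ (star a₁ * a₁) = 1 - φ (star a₂ * a₂) :=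
    eq_sub_of_add_eq (map_star_mul_self_add_eq_one hφ_one hφ_inv)
  have hx : φ x = φ (star a₁ * x * a₁) + φ (star a₂ * x * a₂) := by
    rw [← hφ_inv x, heisenbergMap, map_add]
  simp only [varianceObservable, map_add, map_sub, map_smul, smul_eq_mul]
  rw [hx, hp, hm]
  ring

theorem stmt13_general {L : 𝓐} (hφ_one : φ 1 = 1)
    (hφ_inv : ∀ x, φ (heisenbergMap a₁ a₂ x) = φ x)
    (hL : L - heisenbergMap a₁ a₂ L = (2 : R) • (star a₁ * a₁) - (1 + m) • (1 : 𝓐)) :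
    m = 1 - 2 * φ (star a₂ * a₂) ∧
    φ (varianceObservable m a₁ a₂ L) =
      1 - m ^ 2 + 4 * (φ (star a₁ * L * a₁) - φ (star a₁ * a₁) * φ L) :=
  have hm := drift_eq_of_poisson hφ_one hφ_inv hL
  ⟨hm, map_varianceObservable hφ_one hφ_inv hm L⟩

end InvariantFunctional

section MatrixState

variable {n : Type*} [Fintype n]

/-- The expectation functional `x ↦ Re Tr(ρ x)` of a matrix `ρ`, as a real-linear map. -/
def reTraceMul (ρ : Matrix n n ℂ) : Matrix n n ℂ →ₗ[ℝ] ℝ where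
  toFun x := (ρ * x).trace.re
  map_add' x y := by rw [mul_add, trace_add, Complex.add_re]
  map_smul' c x := by
    rw [Matrix.mul_smul, trace_smul, Complex.smul_re, RingHom.id_apply]

lemma reTraceMul_apply (ρ x : Matrix n n ℂ) : reTraceMul ρ x = (ρ * x).trace.re := rfl

lemma reTraceMul_star_mul_self (ρ a : Matrix n n ℂ) :
    reTraceMul ρ (star a * a) = (a * ρ * aᴴ).trace.re := by
  rw [reTraceMul_apply, star_eq_conjTranspose, ← mul_assoc, trace_mul_cycle]

lemma reTraceMul_star_mul_mul (ρ a x : Matrix n n ℂ) :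
    reTraceMul ρ (star a * x * a) = reTraceMul (a * ρ * aᴴ) x := by
  rw [reTraceMul_apply, reTraceMul_apply, star_eq_conjTranspose, ← mul_assoc, trace_mul_comm]
  simp only [mul_assoc]

lemma reTraceMul_heisenbergMap {a₁ a₂ ρ : Matrix n n ℂ}
    (hρ : a₁ * ρ * a₁ᴴ + a₂ * ρ * a₂ᴴ = ρ) (x : Matrix n n ℂ) :
    reTraceMul ρ (heisenbergMap a₁ a₂ x) = reTraceMul ρ x := by
  rw [heisenbergMap, map_add, reTraceMul_star_mul_mul, reTraceMul_star_mul_mul]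
  simp only [reTraceMul_apply]
  rw [← Complex.add_re, ← trace_add, ← add_mul, hρ]

lemma reTraceMul_one [DecidableEq n] {ρ : Matrix n n ℂ} (hρ : ρ.trace = 1) :
    reTraceMul ρ 1 = 1 := by
  rw [reTraceMul_apply, mul_one, hρ, Complex.one_re]

end MatrixState

/-- (One-dimensional variance formula.) For an open quantum random walk
on `ℤ` with jump operators `A₁, A₂`, unique invariant state `ρ_∞`, drift
`m = Tr(A₁ρ_∞A₁^*) − Tr(A₂ρ_∞A₂^*)` and `L` solving `L − L^*(L) = 2A₁^*A₁ − (1+m)I`,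
one has `m = 1 − 2Tr(A₂ρ_∞A₂^*)` and the asymptotic variance `σ² = Re Tr(ρ_∞ Γ)`
satisfies `σ² = 1 − m² + 4(Re Tr(ρ_∞A₁^*LA₁) − Tr(A₁ρ_∞A₁^*)·Re Tr(ρ_∞L))`. -/
theorem stmt13 {k : ℕ}
    (A₁ A₂ : Matrix (Fin k) (Fin k) ℂ)
    (hA : A₁ᴴ * A₁ + A₂ᴴ * A₂ = 1)
    (ρinf : Matrix (Fin k) (Fin k) ℂ) (hρinf : IsDensity ρinf)
    (hinv : A₁ * ρinf * A₁ᴴ + A₂ * ρinf * A₂ᴴ = ρinf)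
    (huniq : ∀ σ, IsDensity σ → A₁ * σ * A₁ᴴ + A₂ * σ * A₂ᴴ = σ → σ = ρinf)
    (m : ℝ)
    (hm : m = ((A₁ * ρinf * A₁ᴴ).trace).re - ((A₂ * ρinf * A₂ᴴ).trace).re)
    (L : Matrix (Fin k) (Fin k) ℂ)
    (hL : L - (A₁ᴴ * L * A₁ + A₂ᴴ * L * A₂) =
      (2 : ℂ) • (A₁ᴴ * A₁) - (1 + m : ℝ) • (1 : Matrix (Fin k) (Fin k) ℂ))
    (Γ : Matrix (Fin k) (Fin k) ℂ)
    (hΓ : Γ = ((1 - m) ^ 2) • (A₁ᴴ * A₁) + ((1 + m) ^ 2) • (A₂ᴴ * A₂) +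
      (2 * (1 - m)) • (A₁ᴴ * L * A₁) - (2 * (1 + m)) • (A₂ᴴ * L * A₂)) :
    m = 1 - 2 * ((A₂ * ρinf * A₂ᴴ).trace).re ∧
    ((ρinf * Γ).trace).re =
      1 - m ^ 2 +
        4 * (((ρinf * (A₁ᴴ * L * A₁)).trace).re -
          ((A₁ * ρinf * A₁ᴴ).trace).re * ((ρinf * L).trace).re) := by
  subst hΓ
  simp only [← reTraceMul_star_mul_self]
  exact stmt13_general (reTraceMul_one hρinf.2) (reTraceMul_heisenbergMap hinv)
    (by simpa only [two_smul, heisenbergMap, star_eq_conjTranspose] using hL)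
end
end
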